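/- Let W be a finite reflection group with root system Φ, a a generic point, Φ⁺ = {α ∈ Φ : ⟨a,α⟩ > 0}, Δ a simple system for Φ⁺, and S = {s_α : α ∈ Δ}. Define the matrix M : Δ × Δ → ℕ by M(α,β) = order of s_α s_β in W. Then M is a Coxeter matrix (M(α,α)=1, M(α,β)=M(β,α)≥2 for α≠β), and the canonical group homomorphism from the Coxeter group presented by M to W, sending the generator indexed by α to s_α, is a group isomorphism; that is, (W,S) is a Coxeter system. -/

import Mathlib

/-!
A simple reflection `s_α` permutes the positive roots other than `α`: the sum of `β` and `-s_α β` is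
a multiple of `α`, so by independence of the simple roots both are positive only if `β = α`. Hence,
when the letters of a word are applied to a simple root one after the other, that root can only
become negative at a letter where it has been moved to the simple root of that letter. This is the
exchange condition for the simple reflections.

The exchange condition implies the deletion condition, and then Matsumoto's theorem: if a family
`t` satisfies `(t_i t_j) ^ ord(s_i s_j) = 1`, then two reduced words with the same product in the
`s_i` have the same product in the `t_i`. Given reduced words ending in `i` and `j`, both are
compared by induction with words `ν μ`, where `ν` is shortest in the common coset modulo
`⟨s_i, s_j⟩` and `μ` only involves `i` and `j`. What remains is the case of two letters, where the
product of a word is either a power of `s_i s_j` or a conjugate of `s_i` or `s_j`, and so nontrivial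
in the second case. Taking for `t` the generators of the presented group shows that the canonical
map is injective.
-/

open scoped RealInnerProductSpace

variable {V : Type*} [NormedAddCommGroup V] [InnerProductSpace ℝ V]

/-- `s` acts as the orthogonal reflection along the nonzero vector `α`:
`s v = v - 2 (⟪v,α⟫/⟪α,α⟫) α`. -/
def IsReflAlong (s : V ≃ₗᵢ[ℝ] V) (α : V) : Prop :=
  α ≠ 0 ∧ ∀ v : V, s v = v - ((2 * ⟪v, α⟫ / ⟪α, α⟫) • α)

/-- `s` is a reflection. -/
def IsReflection (s : V ≃ₗᵢ[ℝ] V) : Prop :=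
  ∃ α : V, IsReflAlong s α

/-- A reflection group: a subgroup of the group of linear isometries of `V` generated by
the reflections it contains. -/
def IsReflectionGroup (W : Subgroup (V ≃ₗᵢ[ℝ] V)) : Prop :=
  W = Subgroup.closure {s | IsReflection s ∧ s ∈ W}

/-- `a` is a generic point for `W`: it is fixed by no reflection belonging to `W`. -/
def IsGeneric (W : Subgroup (V ≃ₗᵢ[ℝ] V)) (a : V) : Prop :=
  ∀ s ∈ W, IsReflection s → s a ≠ a

/-- The `W`-orbit of the point `a`. -/
def orbitSet (W : Subgroup (V ≃ₗᵢ[ℝ] V)) (a : V) : Set V :=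
  {x | ∃ w ∈ W, x = w a}

/-- The permutahedron `Perm^a(W)`: the convex hull of the `W`-orbit of `a`. -/
noncomputable def permutahedron (W : Subgroup (V ≃ₗᵢ[ℝ] V)) (a : V) : Set V :=
  convexHull ℝ (orbitSet W a)

/-- A root system for `W`. -/
structure IsRootSystem (W : Subgroup (V ≃ₗᵢ[ℝ] V)) (Φ : Set V) : Prop where
  finite : Φ.Finite
  nonempty : Φ.Nonempty
  ne_zero : ∀ α ∈ Φ, α ≠ 0
  gen : W = Subgroup.closure {s | ∃ α ∈ Φ, IsReflAlong s α}
  line : ∀ α ∈ Φ, {β ∈ Φ | ∃ t : ℝ, β = t • α} = {α, -α}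
  stable : ∀ w ∈ W, (⇑w) '' Φ = Φ

/-- The positive system determined by the generic point `a`: roots `α` with `⟪a, α⟫ > 0`. -/
def posSystem (a : V) (Φ : Set V) : Set V :=
  {α ∈ Φ | 0 < ⟪a, α⟫}

/-- `Δ` is a simple system for the positive system `Φp`: `Δ ⊆ Φp` is linearly independent and
every element of `Φp` is a linear combination of `Δ` with nonnegative coefficients. -/
def IsSimpleSystem (Φp Δ : Set V) : Prop :=
  Δ ⊆ Φp ∧ LinearIndependent ℝ ((↑) : Δ → V) ∧
    ∀ β ∈ Φp, ∃ c : V →₀ ℝ, (c.support : Set V) ⊆ Δ ∧ (∀ v : V, 0 ≤ c v) ∧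
      β = c.sum fun v r => r • v

/-- The subgroup generated by the reflections along the vectors of `I`. -/
def genSubgroup (I : Set V) : Subgroup (V ≃ₗᵢ[ℝ] V) :=
  Subgroup.closure {s | ∃ β ∈ I, IsReflAlong s β}

section DihedralSubgroups

variable {G : Type*} [Group G] {x y z : G}

theorem exists_zpow_of_mem_closure_pair (hx : x * x = 1) (hy : y * y = 1)
    (hz : z ∈ Subgroup.closure {x, y}) :
    ∃ n : ℤ, z = (x * y) ^ n ∨ z = (x * y) ^ n * x := by
  have hx' : x⁻¹ = x := inv_eq_of_mul_eq_one_right hx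
  have hy' : y⁻¹ = y := inv_eq_of_mul_eq_one_right hy
  have mul_gen : ∀ u g : G, g = x ∨ g = y → (∃ n : ℤ, u = (x * y) ^ n ∨ u = (x * y) ^ n * x) →
      ∃ n : ℤ, u * g = (x * y) ^ n ∨ u * g = (x * y) ^ n * x := by
    rintro _ _ (rfl | rfl) ⟨n, rfl | rfl⟩
    · exact ⟨n, .inr rfl⟩
    · exact ⟨n, .inl (by rw [mul_assoc, hx, mul_one])⟩
    · exact ⟨n - 1, .inr (by rw [zpow_sub_one, mul_inv_rev, hx', hy', mul_assoc, mul_assoc, hx,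
        mul_one])⟩
    · exact ⟨n + 1, .inl (by rw [zpow_add_one, mul_assoc])⟩
  induction hz using Subgroup.closure_induction_right with
  | one => exact ⟨0, .inl (zpow_zero _).symm⟩
  | mul_right u _ g hg ih => exact mul_gen u g hg ih
  | mul_inv_cancel u _ g hg ih =>
    refine mul_gen u g⁻¹ ?_ ih
    rcases hg with rfl | rfl
    exacts [.inl hx', .inr hy']

theorem zpow_mul_ne_one_of_involutions (hx : x * x = 1) (hy : y * y = 1) (hx1 : x ≠ 1)
    (hy1 : y ≠ 1) (n : ℤ) : (x * y) ^ n * x ≠ 1 := by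
  intro h
  have hpow : (x * y) ^ n = x := by
    rw [eq_inv_of_mul_eq_one_left h, inv_eq_of_mul_eq_one_right hx]
  have hcomm : (x * y) * x = x * (x * y) := by
    have := ((Commute.refl (x * y)).zpow_right n).eq
    rwa [hpow] at this
  have hsq : (x * y) ^ (2 : ℤ) = 1 := by
    rw [zpow_two, ← mul_assoc, hcomm, ← mul_assoc, hx, one_mul, hy]
  obtain ⟨k, rfl | rfl⟩ := n.even_or_odd'
  · rw [zpow_mul, hsq, one_zpow] at hpow
    exact hx1 hpow.symm
  · rw [zpow_add_one, zpow_mul, hsq, one_zpow, one_mul, mul_eq_left] at hpow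
    exact hy1 hpow

end DihedralSubgroups

section ExchangeSystems

variable {B G H : Type*} [Group G] [Group H]

section Involutions

variable {s : B → G} {t : B → H} {ω ω' : List B}

theorem prod_reverse_map_of_involutions (hsq : ∀ i, s i * s i = 1) (ω : List B) :
    (ω.map s).reverse.prod = (ω.map s).prod⁻¹ := by
  have hinv : ∀ i, (s i)⁻¹ = s i := fun i => inv_eq_of_mul_eq_one_right (hsq i)
  simp [List.prod_inv_reverse, Function.comp_def, hinv]

/-- In `G × H` a word in the letters `i` and `j` becomes `(s_i s_j, t_i t_j) ^ n` or
`(s_i s_j, t_i t_j) ^ n (s_i, t_i)`; the first coordinate is never `1` in the second case. -/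
theorem prod_map_eq_of_forall_mem_pair (hsq : ∀ i, s i * s i = 1) (hne : ∀ i, s i ≠ 1)
    (ht : ∀ i j, (t i * t j) ^ orderOf (s i * s j) = 1) {i j : B}
    (hω : ∀ k ∈ ω, k ∈ ({i, j} : Set B)) (hω' : ∀ k ∈ ω', k ∈ ({i, j} : Set B))
    (h : (ω.map s).prod = (ω'.map s).prod) : (ω.map t).prod = (ω'.map t).prod := by
  let p : B → G × H := fun k => (s k, t k)
  have hfst : ∀ ρ : List B, (ρ.map p).prod.1 = (ρ.map s).prod := fun ρ => by
    simpa [p, Function.comp_def] using map_list_prod (MonoidHom.fst G H) (ρ.map p)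
  have hsnd : ∀ ρ : List B, (ρ.map p).prod.2 = (ρ.map t).prod := fun ρ => by
    simpa [p, Function.comp_def] using map_list_prod (MonoidHom.snd G H) (ρ.map p)
  have hp : ∀ k, p k * p k = 1 := fun k =>
    Prod.ext (hsq k) (by simpa [hsq] using ht k k)
  have hmem : ∀ ρ : List B, (∀ k ∈ ρ, k ∈ ({i, j} : Set B)) →
      (ρ.map p).prod ∈ Subgroup.closure {p i, p j} := by
    intro ρ hρ
    refine Subgroup.list_prod_mem _ fun g hg => Subgroup.subset_closure ?_
    obtain ⟨k, hk, rfl⟩ := List.mem_map.mp hg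
    rcases hρ k hk with rfl | rfl <;> simp
  set z := (ω.map p).prod * (ω'.map p).prod⁻¹ with hz
  have hz₁ : z.1 = 1 := by simp [hz, hfst, h]
  suffices hz₂ : z.2 = 1 by simpa [hz, hsnd, mul_inv_eq_one] using hz₂
  obtain ⟨n, hn | hn⟩ := exists_zpow_of_mem_closure_pair (hp i) (hp j)
    (mul_mem (hmem ω hω) (inv_mem (hmem ω' hω')))
  · have hpow : (s i * s j) ^ n = 1 := by simpa [← hz, hz₁, p] using (congrArg Prod.fst hn).symm
    obtain ⟨m, rfl⟩ := orderOf_dvd_iff_zpow_eq_one.mpr hpow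
    simpa [← hz, p, zpow_mul, ht] using congrArg Prod.snd hn
  · have hpow : (s i * s j) ^ n * s i = 1 := by
      simpa [← hz, hz₁, p] using (congrArg Prod.fst hn).symm
    exact absurd hpow <| zpow_mul_ne_one_of_involutions (hsq i) (hsq j) (hne i) (hne j) n

/-- The Coxeter matrix of a family of distinct involutions: its entries are the orders of the
products `s i * s j`, where an infinite order is encoded as `0`. -/
noncomputable def coxeterMatrixOfInvolutions (hsq : ∀ i, s i * s i = 1)
    (hinj : Function.Injective s) : CoxeterMatrix B where
  M := .of fun i j => orderOf (s i * s j)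
  isSymm := by
    have hinv : ∀ i, (s i)⁻¹ = s i := fun i => inv_eq_of_mul_eq_one_right (hsq i)
    ext i j
    rw [Matrix.transpose_apply, Matrix.of_apply, Matrix.of_apply, ← orderOf_inv, mul_inv_rev,
      hinv, hinv]
  diagonal i := by rw [Matrix.of_apply, hsq, orderOf_one]
  off_diagonal i j hij h := hij <| hinj <| by
    rw [mul_eq_one_iff_eq_inv.mp (orderOf_eq_one_iff.mp h),
      inv_eq_of_mul_eq_one_right (hsq j)]

end Involutions

/-- A word `ω` in the letters `s i` is reduced if no shorter word has the same product. -/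
def IsReducedWord (s : B → G) (ω : List B) : Prop :=
  ∀ ω' : List B, (ω'.map s).prod = (ω.map s).prod → ω.length ≤ ω'.length

/-- A family of involutions satisfying the exchange condition: if `ω` is reduced but `ω s_i` is
not, then one letter of `ω` can be traded for a final `s_i` without changing the product. -/
structure IsExchangeSystem (s : B → G) : Prop where
  mul_self : ∀ i, s i * s i = 1
  ne_one : ∀ i, s i ≠ 1
  exchange : ∀ ω i, IsReducedWord s ω → ¬ IsReducedWord s (ω ++ [i]) →
    ∃ k < ω.length, ((ω.eraseIdx k ++ [i]).map s).prod = (ω.map s).prod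

theorem exists_isReducedWord (s : B → G) (ω : List B) :
    ∃ ω', IsReducedWord s ω' ∧ (ω'.map s).prod = (ω.map s).prod := by
  obtain ⟨ω', hω', hmin⟩ := (measure (List.length (α := B))).wf.has_min
    {ω' | (ω'.map s).prod = (ω.map s).prod} ⟨ω, rfl⟩
  exact ⟨ω', fun ρ hρ => not_lt.mp (hmin ρ (hρ.trans hω')), hω'⟩

namespace IsReducedWord

variable {s : B → G} {ω ω' : List B}

theorem of_length_le (hω : IsReducedWord s ω) (h : (ω'.map s).prod = (ω.map s).prod)
    (hlen : ω'.length ≤ ω.length) : IsReducedWord s ω' :=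
  fun ρ hρ => hlen.trans (hω ρ (hρ.trans h))

theorem of_append (h : IsReducedWord s (ω ++ ω')) : IsReducedWord s ω := by
  intro ρ hρ
  have := h (ρ ++ ω') (by simp only [List.map_append, List.prod_append, hρ])
  simpa using this

end IsReducedWord

namespace IsExchangeSystem

variable {s : B → G} {t : B → H} {ω ω' : List B}

theorem exists_sublist_isReducedWord (hs : IsExchangeSystem s) (ω : List B) :
    ∃ ω', ω'.Sublist ω ∧ IsReducedWord s ω' ∧ (ω'.map s).prod = (ω.map s).prod := by
  induction ω using List.reverseRecOn with
  | nil => exact ⟨[], .refl _, fun _ _ => Nat.zero_le _, rfl⟩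
  | append_singleton ω i ih =>
    obtain ⟨ω', hsub, hred, hprod⟩ := ih
    by_cases hred' : IsReducedWord s (ω' ++ [i])
    · exact ⟨ω' ++ [i], hsub.append_right _, hred', by simp [hprod]⟩
    · obtain ⟨k, hk, hex⟩ := hs.exchange ω' i hred hred'
      refine ⟨ω'.eraseIdx k, ((List.eraseIdx_sublist _ _).trans hsub).trans
        (List.sublist_append_left _ _), ?_, ?_⟩
      · exact (hred.of_length_le hex (by simp [List.length_eraseIdx_add_one hk])).of_append
      · simp [← hprod, ← hex, mul_assoc, hs.mul_self]

/-- Take for `ν` a shortest word representing an element of the coset of `ω` modulo the subgroup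
generated by `I`. A reduced subword of a word that starts with `ν` and continues in `I` must
retain all of `ν`. -/
theorem exists_minimal_coset_word (hs : IsExchangeSystem s) (I : Set B) (ω : List B) :
    ∃ ν : List B, ∀ κ : List B, (∀ k ∈ κ, k ∈ I) → ∃ μ : List B, (∀ k ∈ μ, k ∈ I) ∧
      IsReducedWord s (ν ++ μ) ∧ ((ν ++ μ).map s).prod = ((ω ++ κ).map s).prod := by
  obtain ⟨ν, ⟨κ₀, hκ₀, hν⟩, hmin⟩ := (measure (List.length (α := B))).wf.has_min
    {ν | ∃ κ : List B, (∀ k ∈ κ, k ∈ I) ∧ (ν.map s).prod = ((ω ++ κ).map s).prod}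
    ⟨ω, [], by simp, by simp⟩
  refine ⟨ν, fun κ hκ => ?_⟩
  obtain ⟨ρ, hρsub, hρred, hρ⟩ := hs.exists_sublist_isReducedWord (ν ++ (κ₀.reverse ++ κ))
  obtain ⟨ν', μ, rfl, hν', hμ⟩ := List.sublist_append_iff.mp hρsub
  have hμI : ∀ k ∈ μ, k ∈ I := by
    intro k hk
    rcases List.mem_append.mp (hμ.subset hk) with h | h
    exacts [hκ₀ k (List.mem_reverse.mp h), hκ k h]
  have hprod : ((ν' ++ μ).map s).prod = ((ω ++ κ).map s).prod := by
    rw [hρ]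
    simp [hν, prod_reverse_map_of_involutions hs.mul_self, mul_assoc]
  have hcoset : (ν'.map s).prod = ((ω ++ (κ ++ μ.reverse)).map s).prod := by
    rw [← List.append_assoc, List.map_append, List.prod_append, ← hprod]
    simp [prod_reverse_map_of_involutions hs.mul_self]
  have hlen : ν.length ≤ ν'.length := not_lt.mp <| hmin ν' ⟨κ ++ μ.reverse, by
    simpa [or_imp, forall_and] using ⟨hκ, hμI⟩, hcoset⟩
  obtain rfl := hν'.eq_of_length_le hlen
  exact ⟨μ, hμI, hρred, hprod⟩

/-- Matsumoto's theorem. With `ν` shortest in the common coset modulo `⟨s i, s j⟩`, words ending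
in `i` and `j` are compared with `ν μ₁ i` and `ν μ₂ j`, where `μ₁`, `μ₂` only involve `i`, `j`. -/
theorem prod_map_eq_of_isReducedWord (hs : IsExchangeSystem s)
    (ht : ∀ i j, (t i * t j) ^ orderOf (s i * s j) = 1)
    (hω : IsReducedWord s ω) (hω' : IsReducedWord s ω')
    (h : (ω.map s).prod = (ω'.map s).prod) : (ω.map t).prod = (ω'.map t).prod := by
  induction hn : ω.length generalizing ω ω' with
  | zero =>
    have hn' : ω'.length = 0 := Nat.le_zero.mp (hn ▸ hω' ω h)
    rw [List.length_eq_zero_iff.mp hn, List.length_eq_zero_iff.mp hn']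
  | succ n ih =>
    have hn' : ω'.length = n + 1 := hn ▸ le_antisymm (hω' ω h) (hω ω' h.symm)
    obtain ⟨ω₁, i, rfl⟩ :=
      (List.eq_nil_or_concat' ω).resolve_left (List.ne_nil_of_length_eq_add_one hn)
    obtain ⟨ω₂, j, rfl⟩ :=
      (List.eq_nil_or_concat' ω').resolve_left (List.ne_nil_of_length_eq_add_one hn')
    obtain ⟨ν, hν⟩ := hs.exists_minimal_coset_word {i, j} (ω₁ ++ [i])
    obtain ⟨μ₁, hμ₁, hred₁, hprod₁⟩ := hν [i] (by simp)
    obtain ⟨μ₂, hμ₂, hred₂, hprod₂⟩ := hν [j] (by simp)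
    have h₁ : (ω₁.map s).prod = ((ν ++ μ₁).map s).prod := by
      rw [hprod₁]
      simp [hs.mul_self]
    have h₂ : (ω₂.map s).prod = ((ν ++ μ₂).map s).prod := by
      rw [hprod₂, List.map_append, List.prod_append, h]
      simp [mul_assoc, hs.mul_self]
    have htail : ((μ₁ ++ [i]).map t).prod = ((μ₂ ++ [j]).map t).prod := by
      refine prod_map_eq_of_forall_mem_pair hs.mul_self hs.ne_one (i := i) (j := j) ht ?_ ?_ ?_
      · simpa [or_imp, forall_and] using hμ₁
      · simpa [or_imp, forall_and] using hμ₂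
      · simpa [h₁, h₂, mul_assoc] using h
    calc ((ω₁ ++ [i]).map t).prod = ((ν ++ μ₁).map t).prod * t i := by
          rw [← ih hω.of_append hred₁ h₁ (by simpa using hn)]
          simp
      _ = (ν.map t).prod * ((μ₁ ++ [i]).map t).prod := by simp [mul_assoc]
      _ = ((ν ++ μ₂).map t).prod * t j := by
          rw [htail]
          simp [mul_assoc]
      _ = ((ω₂ ++ [j]).map t).prod := by
          rw [← ih hω'.of_append hred₂ h₂ (by simpa using hn')]
          simp

theorem exists_isReducedWord_prod_map_eq (hs : IsExchangeSystem s)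
    (ht : ∀ i j, (t i * t j) ^ orderOf (s i * s j) = 1) (ω : List B) :
    ∃ ω', IsReducedWord s ω' ∧ (ω'.map s).prod = (ω.map s).prod ∧
      (ω'.map t).prod = (ω.map t).prod := by
  induction ω using List.reverseRecOn with
  | nil => exact ⟨[], fun _ _ => Nat.zero_le _, rfl, rfl⟩
  | append_singleton ω i ih =>
    obtain ⟨ω', hred, hs', ht'⟩ := ih
    by_cases hred' : IsReducedWord s (ω' ++ [i])
    · exact ⟨ω' ++ [i], hred', by simp [hs'], by simp [ht']⟩
    · obtain ⟨k, hk, hex⟩ := hs.exchange ω' i hred hred'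
      have hred'' : IsReducedWord s (ω'.eraseIdx k ++ [i]) :=
        hred.of_length_le hex (by simp [List.length_eraseIdx_add_one hk])
      have hext := hs.prod_map_eq_of_isReducedWord ht hred'' hred hex
      have hti : t i * t i = 1 := by simpa [hs.mul_self] using ht i i
      exact ⟨ω'.eraseIdx k, hred''.of_append, by simp [← hs', ← hex, mul_assoc, hs.mul_self],
        by simp [← ht', ← hext, mul_assoc, hti]⟩

theorem prod_map_eq (hs : IsExchangeSystem s)
    (ht : ∀ i j, (t i * t j) ^ orderOf (s i * s j) = 1)
    (h : (ω.map s).prod = (ω'.map s).prod) : (ω.map t).prod = (ω'.map t).prod := by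
  obtain ⟨ρ, hρ, hρs, hρt⟩ := hs.exists_isReducedWord_prod_map_eq ht ω
  obtain ⟨ρ', hρ', hρs', hρt'⟩ := hs.exists_isReducedWord_prod_map_eq ht ω'
  rw [← hρt, ← hρt']
  exact hs.prod_map_eq_of_isReducedWord ht hρ hρ' (by rw [hρs, hρs', h])

theorem exists_coxeterSystem (hs : IsExchangeSystem s) (hinj : Function.Injective s)
    (hgen : Subgroup.closure (Set.range s) = ⊤) :
    ∃ cs : CoxeterSystem (coxeterMatrixOfInvolutions hs.mul_self hinj) G, cs.simple = s := by
  let M := coxeterMatrixOfInvolutions hs.mul_self hinj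
  let cs := M.toCoxeterSystem
  have hlift : M.IsLiftable s := fun i j => pow_orderOf_eq_one _
  let φ : M.Group →* G := cs.lift ⟨s, hlift⟩
  have hφ : ∀ i, φ (cs.simple i) = s i := cs.lift_apply_simple hlift
  have hφword : ∀ ω : List B, φ (cs.wordProd ω) = (ω.map s).prod := fun ω => by
    simp [CoxeterSystem.wordProd, map_list_prod, Function.comp_def, hφ]
  have hφinj : Function.Injective φ := by
    intro x y hxy
    obtain ⟨ω, rfl⟩ := cs.wordProd_surjective x
    obtain ⟨ω', rfl⟩ := cs.wordProd_surjective y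
    rw [hφword, hφword] at hxy
    exact hs.prod_map_eq cs.simple_mul_simple_pow hxy
  have hφsurj : Function.Surjective φ := by
    rw [← MonoidHom.range_eq_top, ← top_le_iff, ← hgen, Subgroup.closure_le]
    rintro _ ⟨i, rfl⟩
    exact ⟨cs.simple i, hφ i⟩
  exact ⟨cs.map (MulEquiv.ofBijective φ ⟨hφinj, hφsurj⟩), funext hφ⟩

end IsExchangeSystem

/-- Building up the word from the right, its partial products start in `P i`; the letter that
makes them leave `P i` is the one to erase. -/
theorem exists_eraseIdx_of_notMem {s : B → G} {P : B → Set G} (hsq : ∀ i, s i * s i = 1)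
    (one_mem : ∀ i, 1 ∈ P i)
    (wall : ∀ i j, ∀ w ∈ P i, s j * w ∉ P i → s j * w = w * s i)
    {ω : List B} {i : B} (h : (ω.map s).prod ∉ P i) :
    ∃ k < ω.length, ((ω.eraseIdx k).map s).prod = (ω.map s).prod * s i := by
  induction ω with
  | nil => exact absurd (one_mem i) h
  | cons j ω ih =>
    by_cases hω : (ω.map s).prod ∈ P i
    · refine ⟨0, by simp, ?_⟩
      rw [List.map_cons, List.prod_cons] at h
      simp [wall i j _ hω h, mul_assoc, hsq]
    · obtain ⟨k, hk, hprod⟩ := ih hω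
      exact ⟨k + 1, by simpa using hk, by simp [hprod, mul_assoc]⟩

/-- Here `P i` stands for the elements that keep the `i`-th simple root positive. -/
theorem IsExchangeSystem.of_halfSpaces {s : B → G} {P : B → Set G}
    (hsq : ∀ i, s i * s i = 1) (one_mem : ∀ i, 1 ∈ P i)
    (mul_notMem : ∀ i, ∀ w ∈ P i, w * s i ∉ P i)
    (wall : ∀ i j, ∀ w ∈ P i, s j * w ∉ P i → s j * w = w * s i) : IsExchangeSystem s where
  mul_self := hsq
  ne_one i hi := mul_notMem i 1 (one_mem i) (by rw [hi, one_mul]; exact one_mem i)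
  exchange ω i hω hωi := by
    suffices h : (ω.map s).prod ∉ P i by
      obtain ⟨k, hk, hprod⟩ := exists_eraseIdx_of_notMem hsq one_mem wall h
      exact ⟨k, hk, by simp [hprod, mul_assoc, hsq]⟩
    intro hmem
    obtain ⟨ρ, hρ, hρprod⟩ := exists_isReducedWord s (ω ++ [i])
    have hρlen : ρ.length ≤ ω.length := by
      by_contra! hlt
      exact hωi (hρ.of_length_le hρprod.symm (by simpa using hlt))
    obtain ⟨k, hk, hprod⟩ := exists_eraseIdx_of_notMem hsq one_mem wall (ω := ρ) (i := i)
      (by rw [hρprod]; simpa using mul_notMem i _ hmem)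
    have hle := hω (ρ.eraseIdx k) (by simp [hprod, hρprod, mul_assoc, hsq])
    have := List.length_eraseIdx_add_one hk
    omega

end ExchangeSystems

namespace IsReflAlong

variable {s s' : V ≃ₗᵢ[ℝ] V} {α : V}

theorem apply_self (h : IsReflAlong s α) : s α = -α := by
  rw [h.2, mul_div_assoc, div_self (inner_self_ne_zero.mpr h.1), mul_one, two_smul]
  abel

theorem mul_self (h : IsReflAlong s α) : s * s = 1 := by
  ext v
  change s (s v) = v
  rw [h.2 v, map_sub, map_smul, h.apply_self, h.2 v]
  simp

theorem unique (h : IsReflAlong s α) (h' : IsReflAlong s' α) : s = s' := by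
  ext v
  rw [h.2, h'.2]

theorem neg (h : IsReflAlong s α) : IsReflAlong s (-α) :=
  ⟨neg_ne_zero.mpr h.1, fun v => by simp [h.2 v, neg_div]⟩

theorem conj (h : IsReflAlong s α) (g : V ≃ₗᵢ[ℝ] V) : IsReflAlong (g * s * g⁻¹) (g α) := by
  refine ⟨g.map_eq_zero_iff.not.mpr h.1, fun v => ?_⟩
  obtain ⟨u, rfl⟩ := g.surjective v
  change g (s (g.symm (g u))) = _
  rw [g.symm_apply_apply, h.2, map_sub, map_smul, g.inner_map_map, g.inner_map_map]

end IsReflAlong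

theorem isReflAlong_reflection {α : V} (hα : α ≠ 0) : IsReflAlong (ℝ ∙ α)ᗮ.reflection α := by
  refine ⟨hα, fun v => ?_⟩
  rw [Submodule.reflection_orthogonal_apply, Submodule.reflection_singleton_apply,
    real_inner_comm, real_inner_self_eq_norm_sq]
  simp only [RCLike.ofReal_real_eq_id, id, neg_sub]
  rw [← Nat.cast_smul_eq_nsmul ℝ, smul_smul, mul_div_assoc, Nat.cast_ofNat]

section SimpleSystems

variable {W : Subgroup (V ≃ₗᵢ[ℝ] V)} {Φ Φp Δ : Set V} {a α β γ : V} {s w : V ≃ₗᵢ[ℝ] V}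

namespace IsRootSystem

theorem neg_mem (hΦ : IsRootSystem W Φ) (hβ : β ∈ Φ) : -β ∈ Φ := by
  have : -β ∈ ({β, -β} : Set V) := by simp
  rw [← hΦ.line β hβ] at this
  exact this.1

theorem apply_mem (hΦ : IsRootSystem W Φ) (hw : w ∈ W) (hβ : β ∈ Φ) : w β ∈ Φ := by
  rw [← hΦ.stable w hw]
  exact Set.mem_image_of_mem w hβ

theorem mem_of_isReflAlong (hΦ : IsRootSystem W Φ) (hβ : β ∈ Φ) (hs : IsReflAlong s β) :
    s ∈ W := by
  rw [hΦ.gen]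
  exact Subgroup.subset_closure ⟨β, hβ, hs⟩

theorem mem_or_neg_mem_posSystem (hΦ : IsRootSystem W Φ) (ha : IsGeneric W a) (hβ : β ∈ Φ) :
    β ∈ posSystem a Φ ∨ -β ∈ posSystem a Φ := by
  have hs := isReflAlong_reflection (hΦ.ne_zero β hβ)
  have hne : ⟪a, β⟫ ≠ 0 := fun h =>
    ha _ (hΦ.mem_of_isReflAlong hβ hs) ⟨β, hs⟩ (by rw [hs.2, h]; simp)
  rcases hne.lt_or_gt with h | h
  · exact .inr ⟨hΦ.neg_mem hβ, by rwa [inner_neg_right, neg_pos]⟩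
  · exact .inl ⟨hβ, h⟩

theorem eq_of_mem_posSystem_of_eq_smul (hΦ : IsRootSystem W Φ) (hα : α ∈ posSystem a Φ)
    (hβ : β ∈ posSystem a Φ) {c : ℝ} (h : β = c • α) : β = α := by
  have hmem : β ∈ {β ∈ Φ | ∃ t : ℝ, β = t • α} := ⟨hβ.1, c, h⟩
  rw [hΦ.line α hα.1] at hmem
  refine hmem.resolve_right fun hneg => ?_
  have hpos := hβ.2
  rw [hneg, inner_neg_right] at hpos
  linarith [hα.2]

end IsRootSystem

theorem neg_notMem_posSystem (hβ : β ∈ posSystem a Φ) : -β ∉ posSystem a Φ := fun h => by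
  have := h.2
  rw [inner_neg_right] at this
  linarith [hβ.2]

namespace IsSimpleSystem

theorem exists_eq_smul_of_add_eq_smul (hΔ : IsSimpleSystem Φp Δ) (hα : α ∈ Δ) (hβ : β ∈ Φp)
    (hγ : γ ∈ Φp) {k : ℝ} (h : β + γ = k • α) : ∃ c : ℝ, β = c • α := by
  obtain ⟨b, hbΔ, hb, rfl⟩ := hΔ.2.2 β hβ
  obtain ⟨c, hcΔ, hc, rfl⟩ := hΔ.2.2 γ hγ
  have hzero : b + c - Finsupp.single α k = 0 := by
    have hli : LinearIndepOn ℝ id Δ := hΔ.2.1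
    refine linearIndepOn_iff.mp hli _ ?_ ?_
    · exact sub_mem (add_mem hbΔ hcΔ) (Finsupp.single_mem_supported ℝ k hα)
    · rw [map_sub, map_add, Finsupp.linearCombination_single, sub_eq_zero]
      exact h
  have hsupp : b.support ⊆ {α} := by
    intro v hv
    by_contra hvα
    have hv0 := DFunLike.congr_fun hzero v
    simp only [Finsupp.coe_sub, Finsupp.coe_add, Pi.sub_apply, Pi.add_apply] at hv0
    rw [Finsupp.single_eq_of_ne (by simpa using hvα)] at hv0
    rw [sub_zero, Finsupp.zero_apply] at hv0
    exact Finsupp.mem_support_iff.mp hv (by linarith [hb v, hc v])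
  exact ⟨b α, by rw [Finsupp.sum_of_support_subset b hsupp _ (by simp), Finset.sum_singleton]⟩

theorem exists_inner_pos (hΔ : IsSimpleSystem Φp Δ) (hβ : β ∈ Φp) (h0 : β ≠ 0) :
    ∃ α ∈ Δ, 0 < ⟪α, β⟫ := by
  by_contra! hle
  obtain ⟨c, hcΔ, hc, hsum⟩ := hΔ.2.2 β hβ
  refine (real_inner_self_pos.mpr h0).not_ge ?_
  calc ⟪β, β⟫ = ∑ v ∈ c.support, c v * ⟪v, β⟫ := by
        simpa only [Finsupp.sum, sum_inner, real_inner_smul_left] using congrArg (⟪·, β⟫) hsum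
    _ ≤ 0 := Finset.sum_nonpos fun v hv =>
        mul_nonpos_of_nonneg_of_nonpos (hc v) (hle v (hcΔ hv))

/-- For `β ≠ α` the vectors `β` and `-s β` cannot both be positive, since their sum is a multiple
of `α`. -/
theorem apply_mem_posSystem (hΔ : IsSimpleSystem (posSystem a Φ) Δ) (hΦ : IsRootSystem W Φ)
    (ha : IsGeneric W a) (hα : α ∈ Δ) (hs : IsReflAlong s α)
    (hβ : β ∈ posSystem a Φ) (hne : β ≠ α) : s β ∈ posSystem a Φ := by
  have hsW : s ∈ W := hΦ.mem_of_isReflAlong (hΔ.1 hα).1 hs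
  refine (hΦ.mem_or_neg_mem_posSystem ha (hΦ.apply_mem hsW hβ.1)).resolve_right fun hneg => hne ?_
  have hsum : β + -s β = (2 * ⟪β, α⟫ / ⟪α, α⟫) • α := by rw [hs.2]; abel
  obtain ⟨c, hc⟩ := hΔ.exists_eq_smul_of_add_eq_smul hα hβ hneg hsum
  exact hΦ.eq_of_mem_posSystem_of_eq_smul (hΔ.1 hα) hβ hc

/-- Reflecting in a simple root that makes an acute angle with `β` decreases `⟪a, β⟫`. -/
theorem mem_genSubgroup_of_mem_posSystem (hΔ : IsSimpleSystem (posSystem a Φ) Δ)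
    (hΦ : IsRootSystem W Φ) (ha : IsGeneric W a) (hβ : β ∈ posSystem a Φ)
    (hs : IsReflAlong s β) : s ∈ genSubgroup Δ := by
  have : IsStrictOrder V fun β γ => ⟪a, β⟫ < ⟪a, γ⟫ :=
    { irrefl := fun _ => lt_irrefl _, trans := fun _ _ _ => lt_trans }
  have hwf : (posSystem a Φ).WellFoundedOn fun β γ => ⟪a, β⟫ < ⟪a, γ⟫ :=
    (hΦ.finite.subset fun _ h => h.1).wellFoundedOn
  refine hwf.induction (P := fun β => ∀ s, IsReflAlong s β → s ∈ genSubgroup Δ) hβ ?_ s hs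
  intro β hβ ih s hs
  by_cases hβΔ : β ∈ Δ
  · exact Subgroup.subset_closure ⟨β, hβΔ, hs⟩
  obtain ⟨α, hα, hαβ⟩ := hΔ.exists_inner_pos hβ (hΦ.ne_zero β hβ.1)
  obtain ⟨g, hg⟩ : ∃ g, IsReflAlong g α :=
    ⟨_, isReflAlong_reflection (hΦ.ne_zero α (hΔ.1 hα).1)⟩
  have hgΔ : g ∈ genSubgroup Δ := Subgroup.subset_closure ⟨α, hα, hg⟩
  have hgβ : g β ∈ posSystem a Φ :=
    hΔ.apply_mem_posSystem hΦ ha hα hg hβ (ne_of_mem_of_not_mem hα hβΔ).symm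
  have hlt : ⟪a, g β⟫ < ⟪a, β⟫ := by
    rw [hg.2, inner_sub_right, real_inner_smul_right, sub_lt_self_iff, real_inner_comm]
    have := (hΔ.1 hα).2
    have := real_inner_self_pos.mpr hg.1
    positivity
  have hconj : g * s * g⁻¹ ∈ genSubgroup Δ := ih (g β) hgβ hlt _ (hs.conj g)
  rwa [mul_mem_cancel_right (inv_mem hgΔ), mul_mem_cancel_left hgΔ] at hconj

theorem genSubgroup_eq (hΔ : IsSimpleSystem (posSystem a Φ) Δ)
    (hΦ : IsRootSystem W Φ) (ha : IsGeneric W a) : genSubgroup Δ = W := by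
  rw [hΦ.gen]
  refine le_antisymm (Subgroup.closure_mono fun s ⟨α, hα, hs⟩ => ⟨α, (hΔ.1 hα).1, hs⟩)
    ((Subgroup.closure_le _).mpr ?_)
  rintro s ⟨β, hβ, hs⟩
  rcases hΦ.mem_or_neg_mem_posSystem ha hβ with h | h
  · exact hΔ.mem_genSubgroup_of_mem_posSystem hΦ ha h hs
  · exact hΔ.mem_genSubgroup_of_mem_posSystem hΦ ha h hs.neg

theorem injective_reflection (hΔ : IsSimpleSystem (posSystem a Φ) Δ) (hΦ : IsRootSystem W Φ)
    (ha : IsGeneric W a) {r : Δ → W} (hr : ∀ α, IsReflAlong (r α : V ≃ₗᵢ[ℝ] V) α) :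
    Function.Injective r := by
  intro α β h
  by_contra hne
  have hpos := hΔ.apply_mem_posSystem hΦ ha β.2 (hr β) (hΔ.1 α.2) (Subtype.coe_ne_coe.mpr hne)
  rw [← h, (hr α).apply_self] at hpos
  exact neg_notMem_posSystem (hΔ.1 α.2) hpos

theorem closure_range_reflection (hΔ : IsSimpleSystem (posSystem a Φ) Δ) (hΦ : IsRootSystem W Φ)
    (ha : IsGeneric W a) {r : Δ → W} (hr : ∀ α, IsReflAlong (r α : V ≃ₗᵢ[ℝ] V) α) :
    Subgroup.closure (Set.range r) = ⊤ := by
  apply Subgroup.map_injective W.subtype_injective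
  rw [MonoidHom.map_closure, ← MonoidHom.range_eq_map, W.range_subtype]
  refine Eq.trans (congrArg Subgroup.closure (Set.ext fun s => ?_)) (hΔ.genSubgroup_eq hΦ ha)
  constructor
  · rintro ⟨_, ⟨α, rfl⟩, rfl⟩
    exact ⟨α, α.2, hr α⟩
  · rintro ⟨α, hα, hs⟩
    exact ⟨r ⟨α, hα⟩, ⟨_, rfl⟩, (hr ⟨α, hα⟩).unique hs⟩

theorem isExchangeSystem (hΔ : IsSimpleSystem (posSystem a Φ) Δ) (hΦ : IsRootSystem W Φ)
    (ha : IsGeneric W a) {r : Δ → W} (hr : ∀ α, IsReflAlong (r α : V ≃ₗᵢ[ℝ] V) α) :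
    IsExchangeSystem r := by
  refine .of_halfSpaces (P := fun α => {w : W | (w : V ≃ₗᵢ[ℝ] V) α ∈ posSystem a Φ})
    (fun α => Subtype.ext (hr α).mul_self) (fun α => hΔ.1 α.2) ?_ ?_
  · intro α w hw
    change (w : V ≃ₗᵢ[ℝ] V) ((r α : V ≃ₗᵢ[ℝ] V) α) ∉ posSystem a Φ
    rw [(hr α).apply_self, map_neg]
    exact neg_notMem_posSystem hw
  · intro α γ w hw hγw
    have hwα : (w : V ≃ₗᵢ[ℝ] V) α = γ := by
      by_contra hne
      have hmem := hΔ.apply_mem_posSystem hΦ ha γ.2 (hr γ) hw hne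
      exact hγw hmem
    have hconj : IsReflAlong ((w * r α * w⁻¹ : W) : V ≃ₗᵢ[ℝ] V) γ := hwα ▸ (hr α).conj w
    rw [Subtype.ext ((hr γ).unique hconj), inv_mul_cancel_right]

end IsSimpleSystem

end SimpleSystems

theorem isCoxeterSystem_of_simpleSystem_general
    (W : Subgroup (V ≃ₗᵢ[ℝ] V)) (hWfin : (W : Set (V ≃ₗᵢ[ℝ] V)).Finite)
    (Φ : Set V) (hΦ : IsRootSystem W Φ) (a : V) (ha : IsGeneric W a)
    (Δ : Set V) (hΔ : IsSimpleSystem (posSystem a Φ) Δ)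
    (r : V → (V ≃ₗᵢ[ℝ] V)) (hr : ∀ α ∈ Δ, r α ∈ W ∧ IsReflAlong (r α) α) :
    ∃ M : CoxeterMatrix Δ,
      (∀ α β : Δ, M.M α β = orderOf (r α * r β)) ∧
      (∀ α β : Δ, α ≠ β → 2 ≤ M.M α β) ∧
      ∃ cs : CoxeterSystem M W, ∀ α : Δ, (cs.simple α : V ≃ₗᵢ[ℝ] V) = r α := by
  have : Finite W := hWfin
  let s : Δ → W := fun α => ⟨r α, (hr α α.2).1⟩
  have hs : ∀ α, IsReflAlong (s α : V ≃ₗᵢ[ℝ] V) α := fun α => (hr α α.2).2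
  have hex : IsExchangeSystem s := hΔ.isExchangeSystem hΦ ha hs
  have hinj : Function.Injective s := hΔ.injective_reflection hΦ ha hs
  obtain ⟨cs, hcs⟩ := hex.exists_coxeterSystem hinj (hΔ.closure_range_reflection hΦ ha hs)
  let M : CoxeterMatrix Δ := coxeterMatrixOfInvolutions hex.mul_self hinj
  have hM_two_le : ∀ α β : Δ, α ≠ β → 2 ≤ M.M α β := fun α β hαβ => by
    have hpos : 0 < M.M α β := orderOf_pos (s α * s β)
    have hne_one : M.M α β ≠ 1 := M.off_diagonal α β hαβ
    omega
  exact ⟨M, fun α β => (Subgroup.orderOf_coe (s α * s β)).symm, hM_two_le, cs,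
    fun α => congrArg Subtype.val (congrFun hcs α)⟩

/-- `(W, S)` is a Coxeter system: the matrix of orders `M(α,β) = o(s_α s_β)`
is a Coxeter matrix with off-diagonal entries at least `2`, and the canonical map from the
Coxeter group presented by `M` to `W` sending the generator indexed by `α` to `s_α` is an
isomorphism (packaged as a `CoxeterSystem` whose simple generators are the `s_α`). -/
theorem isCoxeterSystem_of_simpleSystem [FiniteDimensional ℝ V]
    (W : Subgroup (V ≃ₗᵢ[ℝ] V)) (hWfin : (W : Set (V ≃ₗᵢ[ℝ] V)).Finite)
    (Φ : Set V) (hΦ : IsRootSystem W Φ) (a : V) (ha : IsGeneric W a)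
    (Δ : Set V) (hΔ : IsSimpleSystem (posSystem a Φ) Δ)
    (r : V → (V ≃ₗᵢ[ℝ] V)) (hr : ∀ α ∈ Δ, r α ∈ W ∧ IsReflAlong (r α) α) :
    ∃ M : CoxeterMatrix Δ,
      (∀ α β : Δ, M.M α β = orderOf (r α * r β)) ∧
      (∀ α β : Δ, α ≠ β → 2 ≤ M.M α β) ∧
      ∃ cs : CoxeterSystem M W, ∀ α : Δ, (cs.simple α : V ≃ₗᵢ[ℝ] V) = r α :=
  isCoxeterSystem_of_simpleSystem_general W hWfin Φ hΦ a ha Δ hΔ r hr
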